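/- Selberg's integral for n = 2, z = 1/2: for real x, y > 0, ∫_0^1 ∫_0^1 t_1^{x-1} t_2^{x-1} (1-t_1)^{y-1} (1-t_2)^{y-1} |t_1 - t_2| dt_1 dt_2 = [Γ(x)Γ(y)Γ(3/2)/(Γ(x+y+1/2)Γ(3/2)) ] · [Γ(x+1/2)Γ(y+1/2)Γ(2)/(Γ(x+y+1)Γ(3/2))], i.e. equals Γ(x)Γ(y)Γ(x+1/2)Γ(y+1/2) / ( Γ(x+y+1/2) Γ(x+y+1) Γ(3/2) ). -/

import Mathlib

open Real

/-!
For `t₁ > t₂` in the unit interval, the monic polynomial `(X - t₁) * (X - t₂)` is determined by its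
values `t₁ * t₂` and `(1 - t₁) * (1 - t₂)` at `0` and `1`, and the Jacobian of this change of
variables is `t₁ - t₂`, which is the Vandermonde factor `|t₁ - t₂| ^ (2 * z)` at `z = 1/2`. Such a
polynomial has two distinct roots in `(0, 1)` exactly when these values are `a ^ 2` and `b ^ 2` with
`a, b > 0` and `a + b < 1`. In the coordinates `(a, b)` Selberg's integral thus becomes eight times
the Dirichlet integral of `a ^ (2 * x - 1) * b ^ (2 * y - 1)` over this simplex, and Legendre's
duplication formula, used three times, rewrites its value.
-/

section

open MeasureTheory Set

variable {E : Type*} [NormedAddCommGroup E] [NormedSpace ℝ E]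

theorem ofReal_rpow_mul_one_sub_rpow (a b : ℝ) {t : ℝ} (ht : t ∈ Icc (0 : ℝ) 1) :
    ((t ^ (a - 1) * (1 - t) ^ (b - 1) : ℝ) : ℂ) =
      (t : ℂ) ^ ((a : ℂ) - 1) * (1 - (t : ℂ)) ^ ((b : ℂ) - 1) := by
  push_cast [Complex.ofReal_cpow ht.1, Complex.ofReal_cpow (sub_nonneg.2 ht.2)]
  rfl

theorem intervalIntegrable_rpow_mul_one_sub_rpow {a b : ℝ} (ha : 0 < a) (hb : 0 < b) :
    IntervalIntegrable (fun t : ℝ ↦ t ^ (a - 1) * (1 - t) ^ (b - 1)) volume 0 1 := by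
  have h := Complex.betaIntegral_convergent (u := a) (v := b) (by simpa) (by simpa)
  rw [intervalIntegrable_iff_integrableOn_Icc_of_le zero_le_one] at h ⊢
  refine IntegrableOn.congr_fun (Integrable.re h) (fun t ht ↦ ?_) measurableSet_Icc
  simp only [← ofReal_rpow_mul_one_sub_rpow a b ht, RCLike.re_to_complex, Complex.ofReal_re]

theorem integral_rpow_mul_one_sub_rpow {a b : ℝ} (ha : 0 < a) (hb : 0 < b) :
    ∫ t in (0 : ℝ)..1, t ^ (a - 1) * (1 - t) ^ (b - 1) = Gamma a * Gamma b / Gamma (a + b) := by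
  have h := Complex.betaIntegral_eq_Gamma_mul_div a b (by simpa) (by simpa)
  rw [Complex.betaIntegral, ← intervalIntegral.integral_congr (fun t ht ↦
    ofReal_rpow_mul_one_sub_rpow a b (uIcc_of_le (zero_le_one (α := ℝ)) ▸ ht)),
    intervalIntegral.integral_ofReal, ← Complex.ofReal_add] at h
  simp only [Complex.Gamma_ofReal] at h
  exact_mod_cast h

theorem measure_prod_diagonal_eq_zero {α : Type*} [MeasurableSpace α] [MeasurableEq α]
    (μ : Measure α) [SFinite μ] [NullSingletonClass μ] : μ.prod μ (diagonal α) = 0 := by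
  refine (Measure.measure_prod_null measurableSet_diagonal).2 (.of_forall fun x ↦ ?_)
  have : Prod.mk x ⁻¹' diagonal α = {x} := by ext; simp [eq_comm]
  simp [this]

theorem integral_prod_eq_two_smul_setIntegral_lt {α : Type*} [LinearOrder α] [TopologicalSpace α]
    [OrderClosedTopology α] [SecondCountableTopology α] [MeasurableSpace α]
    [OpensMeasurableSpace α] {μ : Measure α} [SFinite μ] [NullSingletonClass μ] {f : α × α → E}
    (hf : ∀ z, f z.swap = f z) :
    ∫ z, f z ∂μ.prod μ = (2 : ℝ) • ∫ z in {z | z.2 < z.1}, f z ∂μ.prod μ := by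
  set L : Set (α × α) := {z | z.2 < z.1}
  have hL : MeasurableSet L := measurableSet_lt measurable_snd measurable_fst
  have hL' : MeasurableSet (Prod.swap ⁻¹' L) := measurable_swap hL
  have hdisj : Disjoint L (Prod.swap ⁻¹' L) :=
    disjoint_left.2 fun z (h : z.2 < z.1) (h' : z.1 < z.2) ↦ lt_asymm h h'
  have hcover : (L ∪ Prod.swap ⁻¹' L : Set (α × α)) =ᵐ[μ.prod μ] univ := by
    refine Filter.eventuallyEq_univ.2
      (measure_mono_null (fun z hz ↦ ?_) (measure_prod_diagonal_eq_zero μ))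
    by_contra hne
    exact hz (lt_or_gt_of_ne hne).symm
  have hswap : MeasurePreserving Prod.swap (μ.prod μ) (μ.prod μ) := Measure.measurePreserving_swap
  have hemb : MeasurableEmbedding (Prod.swap : α × α → α × α) :=
    MeasurableEquiv.prodComm.measurableEmbedding
  by_cases hint : IntegrableOn f L (μ.prod μ)
  · have hint' : IntegrableOn f (Prod.swap ⁻¹' L) (μ.prod μ) := by
      simpa only [Function.comp_def, hf] using (hswap.integrableOn_comp_preimage hemb).2 hint
    have hintegral := hswap.setIntegral_preimage_emb hemb f L
    simp only [hf] at hintegral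
    rw [← setIntegral_univ, ← setIntegral_congr_set hcover,
      setIntegral_union hdisj hL' hint hint', hintegral, two_smul]
  · rw [integral_undef hint, smul_zero, integral_undef fun h ↦ hint h.integrableOn]

theorem setIntegral_regionBetween {α : Type*} [MeasurableSpace α] {μ : Measure α} [SFinite μ]
    {f g : α → ℝ} (hf : Measurable f) (hg : Measurable g) {s : Set α} (hs : MeasurableSet s)
    {F : α × ℝ → E} (hF : IntegrableOn F (regionBetween f g s) (μ.prod volume)) :
    ∫ p in regionBetween f g s, F p ∂μ.prod volume =
      ∫ x in s, (∫ y in Ioo (f x) (g x), F (x, y)) ∂μ := by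
  have hR := measurableSet_regionBetween hf hg hs
  rw [← integral_indicator hR, integral_prod _ (hF.integrable_indicator hR),
    ← integral_indicator hs]
  refine integral_congr_ae (.of_forall fun x ↦ ?_)
  by_cases hx : x ∈ s
  · simp only [indicator_of_mem hx, ← integral_indicator measurableSet_Ioo]
    simp [indicator, regionBetween, hx]
  · simp [indicator, regionBetween, hx]

/-- The open triangle of pairs of distinct points of the open unit interval, larger point first. -/
def openTriangle : Set (ℝ × ℝ) := {z | 0 < z.2 ∧ z.2 < z.1 ∧ z.1 < 1}

/-- The open corner simplex of the plane, the domain of the Dirichlet integral. -/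
def openSimplex : Set (ℝ × ℝ) := {w | 0 < w.1 ∧ 0 < w.2 ∧ w.1 + w.2 < 1}

/-- The values at `0` and `1` of the monic quadratic polynomial with roots `z.1` and `z.2`. -/
def endpointValues (z : ℝ × ℝ) : ℝ × ℝ := (z.1 * z.2, (1 - z.1) * (1 - z.2))

theorem endpointValues_swap (z : ℝ × ℝ) : endpointValues z.swap = endpointValues z := by
  simp [endpointValues, mul_comm]

theorem measurableSet_openTriangle : MeasurableSet openTriangle :=
  (measurableSet_lt measurable_const measurable_snd).inter <|
    (measurableSet_lt measurable_snd measurable_fst).inter <|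
      measurableSet_lt measurable_fst measurable_const

theorem openTriangle_eq_inter : openTriangle = {z | z.2 < z.1} ∩ Ioo 0 1 ×ˢ Ioo 0 1 := by
  ext ⟨t, s⟩
  simp only [openTriangle, mem_inter_iff, mem_prod, mem_Ioo, mem_ofPred_eq]
  grind

theorem openSimplex_eq_regionBetween :
    openSimplex = regionBetween (fun _ ↦ 0) (fun a ↦ 1 - a) (Ioo 0 1) := by
  ext ⟨a, b⟩
  simp only [openSimplex, regionBetween, mem_Ioo, mem_ofPred_eq]
  grind

theorem measurableSet_openSimplex : MeasurableSet openSimplex :=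
  openSimplex_eq_regionBetween ▸
    measurableSet_regionBetween measurable_const (by fun_prop) measurableSet_Ioo

theorem openSimplex_subset_unitSquare : openSimplex ⊆ Ioo 0 1 ×ˢ Ioo 0 1 := by
  rintro ⟨a, b⟩ ⟨ha, hb, hab⟩
  dsimp only at ha hb hab
  exact ⟨⟨ha, by linarith⟩, ⟨hb, by linarith⟩⟩

theorem setIntegral_openSimplex_rpow_mul_rpow {a b : ℝ} (ha : 0 < a) (hb : 0 < b) :
    ∫ w in openSimplex, w.1 ^ (a - 1) * w.2 ^ (b - 1) =
      Gamma a * Gamma b / Gamma (a + b + 1) := by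
  have hrpow {c : ℝ} (hc : 0 < c) : IntegrableOn (fun t : ℝ ↦ t ^ (c - 1)) (Ioo 0 1) :=
    (intervalIntegral.integrableOn_Ioo_rpow_iff one_pos).2 (by linarith)
  have hint : IntegrableOn (fun w : ℝ × ℝ ↦ w.1 ^ (a - 1) * w.2 ^ (b - 1)) openSimplex := by
    have h := (hrpow ha).mul_prod (hrpow hb)
    rw [Measure.prod_restrict] at h
    exact IntegrableOn.mono_set h openSimplex_subset_unitSquare
  have hinner : ∀ t ∈ Ioo (0 : ℝ) 1, ∫ s in Ioo 0 (1 - t), t ^ (a - 1) * s ^ (b - 1) =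
      t ^ (a - 1) * (1 - t) ^ (b + 1 - 1) / b := by
    intro t ht
    rw [integral_const_mul, ← integral_Ioc_eq_integral_Ioo,
      ← intervalIntegral.integral_of_le (sub_pos.2 ht.2).le, integral_rpow (.inl (by linarith)),
      sub_add_cancel, zero_rpow hb.ne', sub_zero, add_sub_cancel_right, mul_div_assoc]
  rw [openSimplex_eq_regionBetween] at hint ⊢
  rw [Measure.volume_eq_prod, setIntegral_regionBetween measurable_const (by fun_prop)
    measurableSet_Ioo hint, setIntegral_congr_fun measurableSet_Ioo hinner, integral_div,
    ← integral_Ioc_eq_integral_Ioo, ← intervalIntegral.integral_of_le zero_le_one,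
    integral_rpow_mul_one_sub_rpow ha (by linarith), Gamma_add_one hb.ne', ← add_assoc]
  field_simp

theorem injOn_endpointValues : InjOn endpointValues openTriangle := by
  rintro ⟨t, s⟩ ⟨-, hlt, -⟩ ⟨t', s'⟩ ⟨-, hlt', -⟩ h
  simp only [endpointValues, Prod.mk.injEq] at h hlt hlt'
  obtain ⟨hprod, hprod'⟩ := h
  have hsum : t + s = t' + s' := by linarith
  have hdiff : t - s = t' - s' := by
    rw [← sq_eq_sq₀ (by linarith) (by linarith)]
    linear_combination (t + s + t' + s') * hsum - 4 * hprod
  ext <;> dsimp only <;> linarith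

theorem injOn_prodMap_sq : InjOn (Prod.map (· ^ 2) (· ^ 2) : ℝ × ℝ → ℝ × ℝ) openSimplex :=
  have hsq : InjOn (fun a : ℝ ↦ a ^ 2) (Ici 0) := (pow_left_strictMonoOn₀ two_ne_zero).injOn
  have hsub : openSimplex ⊆ Ici 0 ×ˢ Ici 0 := fun _ ⟨ha, hb, _⟩ ↦ ⟨ha.le, hb.le⟩
  (hsq.prodMap hsq).mono hsub

theorem sqrt_mul_lt_add_div_two {a b : ℝ} (h : a ≠ b) (hab : 0 < a + b) :
    √(a * b) < (a + b) / 2 := by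
  rw [sqrt_lt' (by linarith)]
  linarith [sq_pos_of_ne_zero (sub_ne_zero.2 h)]

theorem exists_openSimplex_sq_eq_endpointValues {z : ℝ × ℝ} (hz : z ∈ openTriangle) :
    ∃ w ∈ openSimplex, Prod.map (· ^ 2) (· ^ 2) w = endpointValues z := by
  obtain ⟨t, s⟩ := z
  obtain ⟨hs, hlt, ht⟩ : 0 < s ∧ s < t ∧ t < 1 := hz
  have hprod : 0 < t * s := mul_pos (hs.trans hlt) hs
  have hprod' : 0 < (1 - t) * (1 - s) := mul_pos (by linarith) (by linarith)
  have hamgm : √(t * s) < (t + s) / 2 := sqrt_mul_lt_add_div_two hlt.ne' (by linarith)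
  have hamgm' : √((1 - t) * (1 - s)) < (1 - t + (1 - s)) / 2 :=
    sqrt_mul_lt_add_div_two (by grind) (by linarith)
  refine ⟨(√(t * s), √((1 - t) * (1 - s))),
    ⟨sqrt_pos.2 hprod, sqrt_pos.2 hprod', by dsimp only; linarith⟩, ?_⟩
  simp only [Prod.map_apply, endpointValues, sq_sqrt hprod.le, sq_sqrt hprod'.le]

theorem exists_openTriangle_endpointValues_eq_sq {w : ℝ × ℝ} (hw : w ∈ openSimplex) :
    ∃ z ∈ openTriangle, endpointValues z = Prod.map (· ^ 2) (· ^ 2) w := by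
  obtain ⟨a, b⟩ := w
  obtain ⟨ha, hb, hab⟩ : 0 < a ∧ 0 < b ∧ a + b < 1 := hw
  -- The polynomial with values `a ^ 2` at `0` and `b ^ 2` at `1` is `X ^ 2 - 2 * m * X + a ^ 2`.
  set m := (1 + a ^ 2 - b ^ 2) / 2 with hm
  have ham : a < m := by nlinarith
  have hm1 : m < 1 := by nlinarith
  have hdisc : 0 < m ^ 2 - a ^ 2 := by nlinarith
  set d := √(m ^ 2 - a ^ 2)
  have hd : 0 < d := sqrt_pos.2 hdisc
  have hd_sq : d ^ 2 = m ^ 2 - a ^ 2 := sq_sqrt hdisc.le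
  have hdm : d < m := by rw [sqrt_lt' (by linarith)]; nlinarith
  have hdm1 : d < 1 - m := by rw [sqrt_lt' (by linarith)]; nlinarith
  refine ⟨(m + d, m - d), ⟨?_, ?_, ?_⟩, Prod.ext ?_ ?_⟩ <;>
    dsimp only [endpointValues, Prod.map_apply]
  · linarith
  · linarith
  · linarith
  · linear_combination -hd_sq
  · linear_combination -hd_sq - 2 * hm

theorem image_endpointValues_openTriangle :
    endpointValues '' openTriangle = Prod.map (· ^ 2) (· ^ 2) '' openSimplex :=
  Subset.antisymm (image_subset_iff.2 fun _ ↦ exists_openSimplex_sq_eq_endpointValues)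
    (image_subset_iff.2 fun _ ↦ exists_openTriangle_endpointValues_eq_sq)

theorem differentiable_endpointValues : Differentiable ℝ endpointValues := by
  unfold endpointValues
  fun_prop

theorem det_continuousLinearMap_prod {R : Type*} [CommRing R] [TopologicalSpace R]
    (A : R × R →L[R] R × R) :
    A.det = (A (1, 0)).1 * (A (0, 1)).2 - (A (0, 1)).1 * (A (1, 0)).2 := by
  rw [ContinuousLinearMap.det, ← LinearMap.det_toMatrix (Module.Basis.finTwoProd R),
    Matrix.det_fin_two]
  simp [LinearMap.toMatrix_apply]

theorem det_fderiv_endpointValues (z : ℝ × ℝ) : (fderiv ℝ endpointValues z).det = z.1 - z.2 := by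
  have hfst : HasFDerivAt Prod.fst (.fst ℝ ℝ ℝ) z := hasFDerivAt_fst
  have hsnd : HasFDerivAt Prod.snd (.snd ℝ ℝ ℝ) z := hasFDerivAt_snd
  have h : HasFDerivAt endpointValues _ z :=
    (hfst.mul hsnd).prodMk ((hfst.const_sub 1).mul (hsnd.const_sub 1))
  rw [h.fderiv, det_continuousLinearMap_prod]
  simp only [ContinuousLinearMap.prod_apply, add_apply, smul_apply, neg_apply,
    ContinuousLinearMap.coe_fst', ContinuousLinearMap.coe_snd', smul_eq_mul]
  ring

theorem det_fderiv_prodMap {𝕜 : Type*} [NontriviallyNormedField 𝕜] {f g : 𝕜 → 𝕜} {z : 𝕜 × 𝕜}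
    (hf : DifferentiableAt 𝕜 f z.1) (hg : DifferentiableAt 𝕜 g z.2) :
    (fderiv 𝕜 (Prod.map f g) z).det = deriv f z.1 * deriv g z.2 := by
  rw [(hf.hasFDerivAt.prodMap z hg.hasFDerivAt).fderiv, det_continuousLinearMap_prod]
  simp

theorem setIntegral_openTriangle_abs_sub_smul_endpointValues (f : ℝ × ℝ → E) :
    ∫ z in openTriangle, |z.1 - z.2| • f (endpointValues z) =
      ∫ w in openSimplex, (4 * (w.1 * w.2)) • f (w.1 ^ 2, w.2 ^ 2) := by
  have hsq : Differentiable ℝ (Prod.map (· ^ 2) (· ^ 2) : ℝ × ℝ → ℝ × ℝ) := by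
    unfold Prod.map
    fun_prop
  have htriangle := integral_image_eq_integral_abs_det_fderiv_smul volume
    measurableSet_openTriangle
    (fun z _ ↦ (differentiable_endpointValues z).hasFDerivAt.hasFDerivWithinAt)
    injOn_endpointValues f
  have hsimplex := integral_image_eq_integral_abs_det_fderiv_smul volume measurableSet_openSimplex
    (fun w _ ↦ (hsq w).hasFDerivAt.hasFDerivWithinAt) injOn_prodMap_sq f
  simp only [det_fderiv_endpointValues] at htriangle
  rw [← htriangle, image_endpointValues_openTriangle, hsimplex]
  refine setIntegral_congr_fun measurableSet_openSimplex fun w hw ↦ ?_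
  have hpos : 0 < 4 * (w.1 * w.2) := mul_pos four_pos (mul_pos hw.1 hw.2.1)
  have hdet : (fderiv ℝ (Prod.map (· ^ 2) (· ^ 2)) w).det = 4 * (w.1 * w.2) := by
    rw [det_fderiv_prodMap (by fun_prop) (by fun_prop), deriv_pow_field, deriv_pow_field]
    push_cast
    ring
  simp only [hdet, abs_of_pos hpos, Prod.map]

theorem setIntegral_unitSquare_abs_sub_smul_endpointValues (f : ℝ × ℝ → E) :
    ∫ z in Ioo (0 : ℝ) 1 ×ˢ Ioo (0 : ℝ) 1, |z.1 - z.2| • f (endpointValues z) =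
      (8 : ℝ) • ∫ w in openSimplex, (w.1 * w.2) • f (w.1 ^ 2, w.2 ^ 2) := by
  have hsymm (z : ℝ × ℝ) : |z.swap.1 - z.swap.2| • f (endpointValues z.swap) =
      |z.1 - z.2| • f (endpointValues z) := by
    rw [endpointValues_swap, Prod.fst_swap, Prod.snd_swap, abs_sub_comm]
  rw [Measure.volume_eq_prod, ← Measure.prod_restrict,
    integral_prod_eq_two_smul_setIntegral_lt hsymm, Measure.prod_restrict,
    Measure.restrict_restrict (measurableSet_lt measurable_snd measurable_fst),
    ← openTriangle_eq_inter, ← Measure.volume_eq_prod,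
    setIntegral_openTriangle_abs_sub_smul_endpointValues]
  simp only [mul_smul, integral_smul]
  module

theorem integrableOn_unitSquare_abs_sub_mul_rpow {x y : ℝ} (hx : 0 < x) (hy : 0 < y) :
    IntegrableOn (fun z : ℝ × ℝ ↦ z.1 ^ (x - 1) * z.2 ^ (x - 1) * (1 - z.1) ^ (y - 1) *
      (1 - z.2) ^ (y - 1) * |z.1 - z.2|) (Ioo 0 1 ×ˢ Ioo 0 1) := by
  have hbeta := intervalIntegrable_rpow_mul_one_sub_rpow hx hy
  rw [intervalIntegrable_iff_integrableOn_Ioo_of_le zero_le_one] at hbeta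
  have hprod := Integrable.mul_prod hbeta hbeta
  rw [Measure.prod_restrict] at hprod
  have hbound : ∀ z ∈ Ioo (0 : ℝ) 1 ×ˢ Ioo (0 : ℝ) 1, ‖|z.1 - z.2|‖ ≤ 1 := by
    rintro z ⟨⟨_, _⟩, ⟨_, _⟩⟩
    rw [norm_eq_abs, abs_abs, abs_le]
    constructor <;> linarith
  refine (hprod.mul_bdd (by fun_prop : Continuous fun z : ℝ × ℝ ↦ |z.1 - z.2|).aestronglyMeasurable
    (ae_restrict_of_forall_mem (measurableSet_Ioo.prod measurableSet_Ioo) hbound)).congr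
    (.of_forall fun z ↦ ?_)
  ring

theorem intervalIntegral_intervalIntegral_eq_setIntegral {a b c d : ℝ} (hab : a ≤ b) (hcd : c ≤ d)
    {f : ℝ × ℝ → E} (hf : IntegrableOn f (Ioo a b ×ˢ Ioo c d)) :
    ∫ t in a..b, ∫ s in c..d, f (t, s) = ∫ z in Ioo a b ×ˢ Ioo c d, f z := by
  simp only [intervalIntegral.integral_of_le hab, intervalIntegral.integral_of_le hcd,
    integral_Ioc_eq_integral_Ioo]
  exact (setIntegral_prod f hf).symm

end

theorem rpow_two_mul_sub_one {a : ℝ} (ha : 0 < a) (x : ℝ) :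
    a ^ (2 * x - 1) = a * (a ^ 2) ^ (x - 1) := by
  rw [← rpow_natCast_mul ha.le, mul_comm a, ← rpow_add_one ha.ne']
  congr 1
  push_cast
  ring

theorem eight_mul_Gamma_two_mul_mul_Gamma_two_mul_div (x y : ℝ) :
    8 * (Gamma (2 * x) * Gamma (2 * y) / Gamma (2 * x + 2 * y + 1)) =
      Gamma x * Gamma y * Gamma (x + 1 / 2) * Gamma (y + 1 / 2) /
        (Gamma (x + y + 1 / 2) * Gamma (x + y + 1) * Gamma (3 / 2)) := by
  have hx := Gamma_mul_Gamma_add_half x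
  have hy := Gamma_mul_Gamma_add_half y
  have hxy := Gamma_mul_Gamma_add_half (x + y + 1 / 2)
  have hthree_halves : Gamma (3 / 2) = √π / 2 := by
    rw [show (3 / 2 : ℝ) = 1 / 2 + 1 by norm_num, Gamma_add_one (by norm_num), Gamma_one_half_eq]
    ring
  have hpow : (2 : ℝ) ^ (1 - 2 * x) * 2 ^ (1 - 2 * y) = 4 * 2 ^ (1 - (2 * x + 2 * y + 1)) := by
    rw [show (4 : ℝ) = 2 ^ (2 : ℝ) by norm_num, ← rpow_add two_pos, ← rpow_add two_pos]
    ring_nf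
  have hpow_ne : (2 : ℝ) ^ (1 - (2 * x + 2 * y + 1)) ≠ 0 := (rpow_pos_of_pos two_pos _).ne'
  have hpi_ne : √π ≠ 0 := (sqrt_pos.2 pi_pos).ne'
  rw [show x + y + 1 / 2 + 1 / 2 = x + y + 1 by ring,
    show 2 * (x + y + 1 / 2) = 2 * x + 2 * y + 1 by ring] at hxy
  symm
  calc
    _ = (Gamma x * Gamma (x + 1 / 2)) * (Gamma y * Gamma (y + 1 / 2)) /
          (Gamma (x + y + 1 / 2) * Gamma (x + y + 1) * Gamma (3 / 2)) := by ring
    _ = Gamma (2 * x) * Gamma (2 * y) * √π ^ 2 * (2 ^ (1 - 2 * x) * 2 ^ (1 - 2 * y)) /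
          (Gamma (2 * x + 2 * y + 1) * 2 ^ (1 - (2 * x + 2 * y + 1)) * √π * (√π / 2)) := by
      rw [hx, hy, hxy, hthree_halves]; ring
    _ = 8 * (Gamma (2 * x) * Gamma (2 * y) / Gamma (2 * x + 2 * y + 1)) := by
      rw [hpow]; field_simp; ring

/-- Selberg's integral for `n = 2`, `z = 1/2`:
`∫∫ t₁^{x-1} t₂^{x-1} (1-t₁)^{y-1} (1-t₂)^{y-1} |t₁-t₂| dt₁ dt₂
 = Γ(x)Γ(y)Γ(x+1/2)Γ(y+1/2)/(Γ(x+y+1/2)Γ(x+y+1)Γ(3/2))`. -/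
theorem selberg_n_two_z_half (x y : ℝ) (hx : 0 < x) (hy : 0 < y) :
    (∫ t₁ in (0 : ℝ)..1, ∫ t₂ in (0 : ℝ)..1,
        t₁ ^ (x - 1) * t₂ ^ (x - 1) * (1 - t₁) ^ (y - 1) * (1 - t₂) ^ (y - 1) *
          |t₁ - t₂|)
      = Gamma x * Gamma y * Gamma (x + 1 / 2) * Gamma (y + 1 / 2) /
          (Gamma (x + y + 1 / 2) * Gamma (x + y + 1) * Gamma (3 / 2)) := by
  let f (w : ℝ × ℝ) : ℝ := w.1 ^ (x - 1) * w.2 ^ (y - 1)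
  calc
    _ = ∫ z in Set.Ioo (0 : ℝ) 1 ×ˢ Set.Ioo (0 : ℝ) 1, |z.1 - z.2| • f (endpointValues z) := by
      rw [intervalIntegral_intervalIntegral_eq_setIntegral zero_le_one zero_le_one
        (integrableOn_unitSquare_abs_sub_mul_rpow hx hy)]
      refine MeasureTheory.setIntegral_congr_fun (measurableSet_Ioo.prod measurableSet_Ioo) ?_
      rintro z ⟨⟨h₁, h₁'⟩, ⟨h₂, h₂'⟩⟩
      simp only [f, endpointValues, mul_rpow h₁.le h₂.le,
        mul_rpow (sub_pos.2 h₁').le (sub_pos.2 h₂').le, smul_eq_mul]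
      ring
    _ = 8 * ∫ w in openSimplex, (w.1 * w.2) • f (w.1 ^ 2, w.2 ^ 2) :=
      setIntegral_unitSquare_abs_sub_smul_endpointValues f
    _ = 8 * ∫ w in openSimplex, w.1 ^ (2 * x - 1) * w.2 ^ (2 * y - 1) := by
      congr 1
      refine MeasureTheory.setIntegral_congr_fun measurableSet_openSimplex fun w hw ↦ ?_
      simp only [f, smul_eq_mul, rpow_two_mul_sub_one hw.1, rpow_two_mul_sub_one hw.2.1]
      ring
    _ = 8 * (Gamma (2 * x) * Gamma (2 * y) / Gamma (2 * x + 2 * y + 1)) := by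
      rw [setIntegral_openSimplex_rpow_mul_rpow (by linarith) (by linarith)]
    _ = _ := eight_mul_Gamma_two_mul_mul_Gamma_two_mul_div x y
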